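/- Let Γ be a nontrivial finite abelian group and ρ: Γ → O(n+1) a fixed point free orthogonal representation that decomposes as an orthogonal direct sum ρ = ρ₁ ⊕ ⋯ ⊕ ρ_k of k ≥ 2 irreducible subrepresentations. If ρ_i is equivalent to ρ_j for some i ≠ j, then the quotient S^n/ρ(Γ) has radius π/2; in particular, for every unit vector u ∈ ℝ^{n+1} there is a unit vector v with ⟨ρ(g)u, v⟩ ≤ 0 for all g ∈ Γ. -/

import Mathlib

open scoped RealInnerProductSpace

section Defs

variable {Γ : Type*} [Group Γ] {E : Type*} [NormedAddCommGroup E] [InnerProductSpace ℝ E]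

/-- A subspace `W` is invariant under the orthogonal representation `ρ`. -/
def IsInvariantSubspace (ρ : Γ →* (E ≃ₗᵢ[ℝ] E)) (W : Submodule ℝ E) : Prop :=
  ∀ g : Γ, ∀ x ∈ W, ρ g x ∈ W

/-- A nonzero invariant subspace `W` is an irreducible subrepresentation of `ρ` if it
contains no invariant subspace other than `⊥` and itself. -/
def IsIrreducibleSubrep (ρ : Γ →* (E ≃ₗᵢ[ℝ] E)) (W : Submodule ℝ E) : Prop :=
  W ≠ ⊥ ∧ IsInvariantSubspace ρ W ∧
    ∀ U : Submodule ℝ E, U ≤ W → IsInvariantSubspace ρ U → U = ⊥ ∨ U = W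

/-- Two invariant subspaces carry equivalent subrepresentations of `ρ` if there is an
orthogonal (isometric linear) isomorphism between them intertwining the actions. -/
def AreEquivalentSubreps (ρ : Γ →* (E ≃ₗᵢ[ℝ] E)) (W₁ W₂ : Submodule ℝ E) : Prop :=
  ∃ e : W₁ ≃ₗᵢ[ℝ] W₂, ∀ (g : Γ) (x : W₁) (hx : ρ g (x : E) ∈ W₁),
    ((e ⟨ρ g (x : E), hx⟩ : W₂) : E) = ρ g ((e x : W₂) : E)

/-- The radius of the spherical space form `Sⁿ/ρ(Γ)`:
`rad = min over orbits Γu of max over orbits Γv of dist(Γu,Γv)`, where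
`dist(Γu,Γv) = min_{g∈Γ} arccos ⟪ρ(g)u, v⟫`. -/
noncomputable def sphereQuotRadius [Fintype Γ] (ρ : Γ →* (E ≃ₗᵢ[ℝ] E)) : ℝ :=
  ⨅ u : {x : E // ‖x‖ = 1}, ⨆ v : {x : E // ‖x‖ = 1}, ⨅ g : Γ,
    Real.arccos ⟪ρ g u.1, v.1⟫

end Defs

/-!
If the orbit of some `u` spans `E`, then, since `Γ` is abelian, every equivariant `T : E → E` is a
linear combination `A` of the operators `ρ g`: choose `A` with `A u = T u`, and both sides commute
with `Γ`. Such a `T` preserves every invariant subspace. Applied to the orthogonal projection onto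
`W₁` followed by an equivalence `W₁ ≃ W₂`, this gives `W₂ ≤ W₁`, so `W₁ = W₂` by dimension. So if
distinct invariant subspaces are equivalent, no orbit spans `E`, and every orbit of unit vectors has
a unit vector orthogonal to it, at distance exactly `π / 2`. In the other direction, no point is at
distance greater than `π / 2` from an orbit whose sum is zero, and a nontrivial action has such an
orbit: that of the normalization of some `ρ g x - x`.
-/

section OrthogonalRepresentation

variable {Γ : Type*} [Group Γ] {E : Type*} [NormedAddCommGroup E] [InnerProductSpace ℝ E]

theorem inner_apply_left_eq_inner_inv_apply (ρ : Γ →* (E ≃ₗᵢ[ℝ] E)) (g : Γ) (x y : E) :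
    ⟪ρ g x, y⟫ = ⟪x, ρ g⁻¹ y⟫ := by
  rw [map_inv]
  exact (ρ g).inner_map_eq_flip x y

theorem IsInvariantSubspace.orthogonal {ρ : Γ →* (E ≃ₗᵢ[ℝ] E)} {W : Submodule ℝ E}
    (hW : IsInvariantSubspace ρ W) : IsInvariantSubspace ρ Wᗮ := by
  intro g x hx
  rw [Submodule.mem_orthogonal'] at hx ⊢
  intro y hy
  rw [inner_apply_left_eq_inner_inv_apply]
  exact hx _ (hW g⁻¹ y hy)

theorem IsInvariantSubspace.starProjection_apply {ρ : Γ →* (E ≃ₗᵢ[ℝ] E)} {W : Submodule ℝ E}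
    [W.HasOrthogonalProjection] (hW : IsInvariantSubspace ρ W) (g : Γ) (x : E) :
    W.starProjection (ρ g x) = ρ g (W.starProjection x) := by
  apply Submodule.eq_starProjection_of_mem_orthogonal
  · exact hW g _ (W.starProjection_apply_mem x)
  · rw [← map_sub]
    exact hW.orthogonal g _ (W.sub_starProjection_mem_orthogonal x)

/-- The space of linear operators spanned by a representation, i.e. the image of the group
algebra `ℝ[Γ]` in `End E`. -/
def operatorSpan (ρ : Γ →* (E ≃ₗᵢ[ℝ] E)) : Submodule ℝ (Module.End ℝ E) :=
  Submodule.span ℝ (Set.range fun g => ((ρ g).toLinearEquiv : E →ₗ[ℝ] E))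

/-- The linear span of the orbit of `u`, i.e. the cyclic subrepresentation generated by `u`. -/
def orbitSpan (ρ : Γ →* (E ≃ₗᵢ[ℝ] E)) (u : E) : Submodule ℝ E :=
  Submodule.span ℝ (Set.range fun g => ρ g u)

theorem apply_mem_orbitSpan (ρ : Γ →* (E ≃ₗᵢ[ℝ] E)) (g : Γ) (u : E) :
    ρ g u ∈ orbitSpan ρ u :=
  Submodule.subset_span ⟨g, rfl⟩

instance finiteDimensional_orbitSpan [Finite Γ] (ρ : Γ →* (E ≃ₗᵢ[ℝ] E)) (u : E) :
    FiniteDimensional ℝ (orbitSpan ρ u) :=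
  FiniteDimensional.span_of_finite ℝ (Set.finite_range _)

theorem map_operatorSpan_eq_orbitSpan (ρ : Γ →* (E ≃ₗᵢ[ℝ] E)) (u : E) :
    (operatorSpan ρ).map (LinearMap.applyₗ u) = orbitSpan ρ u := by
  rw [operatorSpan, orbitSpan, Submodule.map_span, ← Set.range_comp]
  rfl

theorem IsInvariantSubspace.apply_mem_of_mem_operatorSpan {ρ : Γ →* (E ≃ₗᵢ[ℝ] E)}
    {W : Submodule ℝ E} (hW : IsInvariantSubspace ρ W) {A : Module.End ℝ E}
    (hA : A ∈ operatorSpan ρ) {x : E} (hx : x ∈ W) : A x ∈ W := by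
  have hle : operatorSpan ρ ≤ W.comap (LinearMap.applyₗ x) := by
    rw [operatorSpan, Submodule.span_le]
    rintro _ ⟨g, rfl⟩
    exact hW g x hx
  exact hle hA

theorem AreEquivalentSubreps.exists_equivariant_map_eq {ρ : Γ →* (E ≃ₗᵢ[ℝ] E)}
    {W₁ W₂ : Submodule ℝ E} [W₁.HasOrthogonalProjection] (h : AreEquivalentSubreps ρ W₁ W₂)
    (hW₁ : IsInvariantSubspace ρ W₁) :
    ∃ T : Module.End ℝ E, (∀ g x, T (ρ g x) = ρ g (T x)) ∧ W₁.map T = W₂ := by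
  obtain ⟨e, he⟩ := h
  let P := W₁.orthogonalProjectionOnto
  let T : Module.End ℝ E := W₂.subtype ∘ₗ e.toLinearEquiv.toLinearMap ∘ₗ P.toLinearMap
  have hT_mem (x : W₁) : T x = e x :=
    congrArg (fun y => (e y : E)) (W₁.orthogonalProjectionOnto_mem_subspace_eq_self x)
  refine ⟨T, fun g x => ?_, le_antisymm ?_ fun y hy => ?_⟩
  · have hP : P (ρ g x) = ⟨ρ g (P x), hW₁ g _ (P x).2⟩ :=
      Subtype.ext (hW₁.starProjection_apply g x)
    calc ((e (P (ρ g x)) : W₂) : E) = e ⟨ρ g (P x), hW₁ g _ (P x).2⟩ := by rw [hP]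
      _ = ρ g (e (P x)) := he g _ _
  · rintro _ ⟨x, -, rfl⟩
    exact (e (P x)).2
  · exact ⟨e.symm ⟨y, hy⟩, (e.symm ⟨y, hy⟩).2, by rw [hT_mem, e.apply_symm_apply]⟩

end OrthogonalRepresentation

section Abelian

variable {Γ : Type*} [CommGroup Γ] {E : Type*} [NormedAddCommGroup E] [InnerProductSpace ℝ E]

theorem apply_comm_of_mem_operatorSpan {ρ : Γ →* (E ≃ₗᵢ[ℝ] E)} {A : Module.End ℝ E}
    (hA : A ∈ operatorSpan ρ) (g : Γ) (x : E) : A (ρ g x) = ρ g (A x) := by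
  induction hA using Submodule.span_induction with
  | mem A hA =>
    obtain ⟨h, rfl⟩ := hA
    change (ρ h * ρ g) x = (ρ g * ρ h) x
    rw [← map_mul, ← map_mul, mul_comm]
  | zero => simp only [LinearMap.zero_apply, map_zero]
  | add A B _ _ ihA ihB => simp only [LinearMap.add_apply, map_add, ihA, ihB]
  | smul c A _ ihA => simp only [LinearMap.smul_apply, map_smul, ihA]

theorem mem_operatorSpan_of_orbitSpan_eq_top {ρ : Γ →* (E ≃ₗᵢ[ℝ] E)} {u : E}
    (hu : orbitSpan ρ u = ⊤) {T : Module.End ℝ E} (hT : ∀ g x, T (ρ g x) = ρ g (T x)) :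
    T ∈ operatorSpan ρ := by
  obtain ⟨A, hA, hAu⟩ : T u ∈ (operatorSpan ρ).map (LinearMap.applyₗ u) := by
    rw [map_operatorSpan_eq_orbitSpan, hu]
    exact Submodule.mem_top
  have hTA : T = A := by
    refine LinearMap.ext_on_range (v := fun g => ρ g u) hu fun g => ?_
    calc T (ρ g u) = ρ g (T u) := hT g u
      _ = ρ g (A u) := by rw [← hAu, LinearMap.applyₗ_apply_apply]
      _ = A (ρ g u) := (apply_comm_of_mem_operatorSpan hA g u).symm
  exact hTA ▸ hA

theorem AreEquivalentSubreps.le_of_orbitSpan_eq_top {ρ : Γ →* (E ≃ₗᵢ[ℝ] E)}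
    {W₁ W₂ : Submodule ℝ E} [W₁.HasOrthogonalProjection] (h : AreEquivalentSubreps ρ W₁ W₂)
    (hW₁ : IsInvariantSubspace ρ W₁) {u : E} (hu : orbitSpan ρ u = ⊤) : W₂ ≤ W₁ := by
  obtain ⟨T, hT, rfl⟩ := h.exists_equivariant_map_eq hW₁
  rintro _ ⟨x, hx, rfl⟩
  exact hW₁.apply_mem_of_mem_operatorSpan (mem_operatorSpan_of_orbitSpan_eq_top hu hT) hx

theorem AreEquivalentSubreps.orbitSpan_ne_top {ρ : Γ →* (E ≃ₗᵢ[ℝ] E)}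
    {W₁ W₂ : Submodule ℝ E} (h : AreEquivalentSubreps ρ W₁ W₂)
    (hW₁ : IsInvariantSubspace ρ W₁) (hne : W₁ ≠ W₂) (u : E)
    [FiniteDimensional ℝ (orbitSpan ρ u)] : orbitSpan ρ u ≠ ⊤ := by
  intro hu
  have : FiniteDimensional ℝ E :=
    Module.finite_def.2 (hu ▸ Module.Finite.iff_fg.1 ‹FiniteDimensional ℝ (orbitSpan ρ u)›)
  have hle : W₂ ≤ W₁ := h.le_of_orbitSpan_eq_top hW₁ hu
  obtain ⟨e, -⟩ := h
  exact hne (Submodule.eq_of_le_of_finrank_eq hle e.toLinearEquiv.finrank_eq.symm).symm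

end Abelian

section SphereQuotient

variable {Γ : Type*} [Group Γ] {E : Type*} [NormedAddCommGroup E] [InnerProductSpace ℝ E]

theorem exists_norm_eq_one_forall_inner_eq_zero {ρ : Γ →* (E ≃ₗᵢ[ℝ] E)} {u : E}
    [(orbitSpan ρ u).HasOrthogonalProjection] (hu : orbitSpan ρ u ≠ ⊤) :
    ∃ v : E, ‖v‖ = 1 ∧ ∀ g : Γ, ⟪ρ g u, v⟫ = 0 := by
  obtain ⟨v, hv, hv0⟩ :=
    Submodule.exists_mem_ne_zero_of_ne_bot (mt Submodule.orthogonal_eq_bot_iff.1 hu)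
  refine ⟨‖v‖⁻¹ • v, norm_smul_inv_norm hv0, fun g => ?_⟩
  rw [inner_smul_right, hv _ (apply_mem_orbitSpan ρ g u), mul_zero]

theorem iInf_arccos_inner_le_pi (ρ : Γ →* (E ≃ₗᵢ[ℝ] E)) (u v : E) :
    ⨅ g : Γ, Real.arccos ⟪ρ g u, v⟫ ≤ Real.pi :=
  ciInf_le_of_le ⟨0, Set.forall_mem_range.2 fun _ => Real.arccos_nonneg _⟩ 1
    (Real.arccos_le_pi _)

variable [Fintype Γ]

theorem sum_apply_apply_sub_eq_zero (ρ : Γ →* (E ≃ₗᵢ[ℝ] E)) (h : Γ) (x : E) :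
    ∑ g : Γ, ρ g (ρ h x - x) = 0 := by
  have hmul : ∀ g, ρ g (ρ h x) = ρ (g * h) x := fun g => by rw [map_mul]; rfl
  simp only [map_sub, hmul, Finset.sum_sub_distrib]
  exact sub_eq_zero.2 (Equiv.sum_comp (Equiv.mulRight h) fun g => ρ g x)

theorem exists_norm_eq_one_sum_apply_eq_zero {ρ : Γ →* (E ≃ₗᵢ[ℝ] E)} (hρ : ρ ≠ 1) :
    ∃ u : E, ‖u‖ = 1 ∧ ∑ g : Γ, ρ g u = 0 := by
  obtain ⟨h, hh⟩ := DFunLike.ne_iff.1 hρ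
  obtain ⟨x, hx⟩ := DFunLike.ne_iff.1 hh
  refine ⟨‖ρ h x - x‖⁻¹ • (ρ h x - x), norm_smul_inv_norm (sub_ne_zero.2 hx), ?_⟩
  simp only [map_smul, ← Finset.smul_sum, sum_apply_apply_sub_eq_zero, smul_zero]

theorem exists_inner_nonneg_of_sum_apply_eq_zero {ρ : Γ →* (E ≃ₗᵢ[ℝ] E)} {u : E}
    (hu : ∑ g : Γ, ρ g u = 0) (v : E) : ∃ g : Γ, 0 ≤ ⟪ρ g u, v⟫ := by
  have hsum : ∑ g : Γ, ⟪ρ g u, v⟫ = 0 := by rw [← sum_inner, hu, inner_zero_left]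
  by_contra! hneg
  exact (Finset.sum_neg (fun g _ => hneg g) Finset.univ_nonempty).ne hsum

theorem pi_div_two_le_sphereQuotRadius [Nontrivial E] {ρ : Γ →* (E ≃ₗᵢ[ℝ] E)}
    (h : ∀ u : E, ‖u‖ = 1 → ∃ v : E, ‖v‖ = 1 ∧ ∀ g : Γ, ⟪ρ g u, v⟫ ≤ 0) :
    Real.pi / 2 ≤ sphereQuotRadius ρ := by
  have : Nonempty {x : E // ‖x‖ = 1} := nonempty_subtype.2 (exists_norm_eq E zero_le_one)
  refine le_ciInf fun u => ?_
  obtain ⟨v, hv, huv⟩ := h u u.2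
  have hbdd : BddAbove (Set.range fun v : {x : E // ‖x‖ = 1} =>
      ⨅ g : Γ, Real.arccos ⟪ρ g u.1, v.1⟫) :=
    ⟨Real.pi, Set.forall_mem_range.2 fun v => iInf_arccos_inner_le_pi ρ u v⟩
  refine le_ciSup_of_le hbdd ⟨v, hv⟩ (le_ciInf fun g => ?_)
  exact not_lt.1 (mt Real.arccos_lt_pi_div_two.1 (huv g).not_gt)

theorem sphereQuotRadius_le_pi_div_two {ρ : Γ →* (E ≃ₗᵢ[ℝ] E)} {u : E} (hu : ‖u‖ = 1)
    (h : ∀ v : E, ‖v‖ = 1 → ∃ g : Γ, 0 ≤ ⟪ρ g u, v⟫) :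
    sphereQuotRadius ρ ≤ Real.pi / 2 := by
  have hbdd : BddBelow (Set.range fun u : {x : E // ‖x‖ = 1} =>
      ⨆ v : {x : E // ‖x‖ = 1}, ⨅ g : Γ, Real.arccos ⟪ρ g u.1, v.1⟫) :=
    ⟨0, Set.forall_mem_range.2 fun u => Real.iSup_nonneg fun v =>
      Real.iInf_nonneg fun g => Real.arccos_nonneg _⟩
  have : Nonempty {x : E // ‖x‖ = 1} := ⟨⟨u, hu⟩⟩
  refine ciInf_le_of_le hbdd ⟨u, hu⟩ (ciSup_le fun v => ?_)
  obtain ⟨g, hg⟩ := h v v.2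
  exact ciInf_le_of_le (Set.finite_range _).bddBelow g (Real.arccos_le_pi_div_two.2 hg)

end SphereQuotient

theorem radius_eq_half_pi_of_equivalent_summands_abelian_general
    {Γ : Type*} [CommGroup Γ] [Fintype Γ]
    {E : Type*} [NormedAddCommGroup E] [InnerProductSpace ℝ E]
    {ρ : Γ →* (E ≃ₗᵢ[ℝ] E)} (hρ : ρ ≠ 1) {W₁ W₂ : Submodule ℝ E}
    (hW₁ : IsInvariantSubspace ρ W₁) (hne : W₁ ≠ W₂) (hequiv : AreEquivalentSubreps ρ W₁ W₂) :
    sphereQuotRadius ρ = Real.pi / 2 ∧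
      ∀ u : E, ∃ v : E, ‖v‖ = 1 ∧ ∀ g : Γ, ⟪ρ g u, v⟫ = 0 := by
  have hperp (u : E) : ∃ v : E, ‖v‖ = 1 ∧ ∀ g : Γ, ⟪ρ g u, v⟫ = 0 :=
    exists_norm_eq_one_forall_inner_eq_zero (hequiv.orbitSpan_ne_top hW₁ hne u)
  obtain ⟨u, hu, hsum⟩ := exists_norm_eq_one_sum_apply_eq_zero hρ
  have : Nontrivial E := ⟨u, 0, norm_ne_zero_iff.1 (hu ▸ one_ne_zero)⟩
  refine ⟨le_antisymm ?_ ?_, hperp⟩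
  · exact sphereQuotRadius_le_pi_div_two hu fun v _ =>
      exists_inner_nonneg_of_sum_apply_eq_zero hsum v
  · exact pi_div_two_le_sphereQuotRadius fun u _ =>
      (hperp u).imp fun v hv => ⟨hv.1, fun g => (hv.2 g).le⟩

/-- Let `Γ` be a nontrivial finite abelian group and `ρ : Γ → O(n+1)` a fixed point free
orthogonal representation which is an orthogonal direct sum of `k ≥ 2` irreducible
subrepresentations.  If two distinct summands are equivalent, then the space form
`Sⁿ/ρ(Γ)` has radius `π/2`; in particular for every unit vector `u` there is a unit
vector `v` with `⟪ρ(g)u, v⟫ ≤ 0` for all `g ∈ Γ`. -/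
theorem radius_eq_half_pi_of_equivalent_summands_abelian
    {n k : ℕ} {Γ : Type*} [CommGroup Γ] [Fintype Γ] [Nontrivial Γ] (hk : 2 ≤ k)
    (ρ : Γ →* (EuclideanSpace ℝ (Fin (n + 1)) ≃ₗᵢ[ℝ] EuclideanSpace ℝ (Fin (n + 1))))
    (hfree : ∀ g : Γ, g ≠ 1 → ∀ x : EuclideanSpace ℝ (Fin (n + 1)), x ≠ 0 → ρ g x ≠ x)
    (V : Fin k → Submodule ℝ (EuclideanSpace ℝ (Fin (n + 1))))
    (horth : ∀ i j, i ≠ j → ∀ x ∈ V i, ∀ y ∈ V j, ⟪x, y⟫ = 0)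
    (hspan : (⨆ i, V i) = ⊤)
    (hirr : ∀ i, IsIrreducibleSubrep ρ (V i))
    (hequiv : ∃ i j, i ≠ j ∧ AreEquivalentSubreps ρ (V i) (V j)) :
    sphereQuotRadius ρ = Real.pi / 2 ∧
      ∀ u : EuclideanSpace ℝ (Fin (n + 1)), ‖u‖ = 1 →
        ∃ v : EuclideanSpace ℝ (Fin (n + 1)), ‖v‖ = 1 ∧ ∀ g : Γ, ⟪ρ g u, v⟫ ≤ 0 := by
  obtain ⟨i, j, hij, hequiv⟩ := hequiv
  have hρ : ρ ≠ 1 := by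
    rintro rfl
    obtain ⟨g, hg⟩ := exists_ne (1 : Γ)
    obtain ⟨x, hx⟩ := exists_ne (0 : EuclideanSpace ℝ (Fin (n + 1)))
    exact hfree g hg x hx rfl
  have hne : V i ≠ V j := fun h => (hirr i).1 <| (Submodule.eq_bot_iff _).2 fun x hx =>
    inner_self_eq_zero.1 (horth i j hij x hx x (h ▸ hx))
  obtain ⟨hrad, hperp⟩ :=
    radius_eq_half_pi_of_equivalent_summands_abelian_general hρ (hirr i).2.1 hne hequiv
  exact ⟨hrad, fun u _ => (hperp u).imp fun v hv => ⟨hv.1, fun g => (hv.2 g).le⟩⟩
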